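/- Let Γ ⊂ PSL(3,ℂ) be a discrete subgroup and let Ω ⊆ ℙ²_ℂ be either Eq(Γ), the Kulkarni discontinuity region Ω(Γ), the complement ℙ²_ℂ∖C(Γ), or a maximal open set on which Γ acts properly discontinuously. If LiG(Ω) ≥ 4, then Li(Ω) is infinite, i.e. infinitely many complex lines are contained in ℙ²_ℂ∖Ω. -/

import Mathlib

/-!
Suppose that only finitely many lines lie in the complement of `Ω`. The constructions of `Ω` from
`Γ` commute with projective transformations: moving `Ω` by `g` amounts to conjugating `Γ` by `g`. So
`Ω` is `Γ`-invariant and `Γ` permutes these lines. Four lines in general position form a projective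
frame of the dual plane, so a projective transformation preserving each of them is the identity; an
element of `Γ` is therefore determined by the images of four such lines, and `Γ` is finite. But then
nothing accumulates and `Ω` is the whole plane, which leaves no room for a line in its complement.
-/

open scoped LinearAlgebra.Projectivization
open Projectivization Matrix Topology

noncomputable section

abbrev V3 : Type := Fin 3 → ℂ
abbrev SL3 := Matrix.SpecialLinearGroup (Fin 3) ℂ
abbrev PSL3 := SL3 ⧸ Subgroup.center SL3
abbrev P2 := ℙ ℂ V3

instance : TopologicalSpace P2 := instTopologicalSpaceQuotient

/-- The action of `SL(3,ℂ)` on `ℙ²_ℂ`. -/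
def smulP2 (A : SL3) : P2 → P2 :=
  Projectivization.map ((Matrix.SpecialLinearGroup.toLin' A : V3 ≃ₗ[ℂ] V3) : V3 →ₗ[ℂ] V3)
    (Matrix.SpecialLinearGroup.toLin' A).injective

lemma smulP2_mk (A : SL3) (v : V3) (hv : v ≠ 0) :
    smulP2 A (Projectivization.mk ℂ v hv) =
      Projectivization.mk ℂ (Matrix.SpecialLinearGroup.toLin' A v)
        ((Matrix.SpecialLinearGroup.toLin' A).map_ne_zero_iff.mpr hv) := rfl

lemma smulP2_one : smulP2 (1 : SL3) = id := by
  funext x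
  induction x using Projectivization.ind with
  | h v hv => simp [smulP2_mk]

lemma smulP2_mul (A B : SL3) : smulP2 (A * B) = smulP2 A ∘ smulP2 B := by
  funext x
  induction x using Projectivization.ind with
  | h v hv =>
    simp only [smulP2_mk, Function.comp_apply, _root_.map_mul]
    rfl

lemma continuous_smulP2 (A : SL3) : Continuous (smulP2 A) := by
  unfold smulP2 Projectivization.map
  exact Continuous.quotient_map'
    ((((Matrix.SpecialLinearGroup.toLin' A : V3 ≃ₗ[ℂ] V3) :
        V3 →ₗ[ℂ] V3).continuous_of_finiteDimensional.comp
      continuous_subtype_val).subtype_mk _) _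
lemma smulP2_center (A : SL3) (hA : A ∈ Subgroup.center SL3) : smulP2 A = id := by
  obtain ⟨r, hr3, hrA⟩ := Matrix.SpecialLinearGroup.mem_center_iff.mp hA
  have hr0 : r ≠ 0 := by
    intro h
    rw [h] at hr3
    simp at hr3
  funext x
  induction x using Projectivization.ind with
  | h v hv =>
    have hAv : Matrix.SpecialLinearGroup.toLin' A v = r • v := by
      rw [Matrix.SpecialLinearGroup.toLin'_apply]
      have : ((A : Matrix (Fin 3) (Fin 3) ℂ)) = Matrix.scalar (Fin 3) r := by
        rw [← hrA]
      rw [this]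
      funext i
      simp [Matrix.toLin'_apply, Matrix.scalar, Matrix.mulVec_diagonal]
  
    simp only [smulP2_mk, id_eq]
    rw [Projectivization.mk_eq_mk_iff]
    exact ⟨Units.mk0 r hr0, by simp [hAv]⟩

/-- The action of `SL(3,ℂ)` on `ℙ²` as a homomorphism into permutations. -/
def slPerm : SL3 →* Equiv.Perm P2 where
  toFun A :=
    { toFun := smulP2 A
      invFun := smulP2 A⁻¹
      left_inv := fun x => by
        have := (smulP2_mul A⁻¹ A).symm
        simp only [inv_mul_cancel, smulP2_one] at this
        exact congrFun this x
      right_inv := fun x => by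
        have := (smulP2_mul A A⁻¹).symm
        simp only [mul_inv_cancel, smulP2_one] at this
        exact congrFun this x }
  map_one' := by
    ext x
    simp [smulP2_one]
  map_mul' A B := by
    ext x
    simp [smulP2_mul]

/-- The action of `PSL(3,ℂ)` on `ℙ²` as a homomorphism into permutations. -/
def actHom : PSL3 →* Equiv.Perm P2 :=
  QuotientGroup.lift (Subgroup.center SL3) slPerm (by
    intro A hA
    ext x
    simpa [slPerm] using congrFun (smulP2_center A hA) x)

/-- The action of an element of `PSL(3,ℂ)` on `ℙ²`. -/
def pact (g : PSL3) : P2 → P2 := actHom g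

instance : MulAction PSL3 P2 where
  smul g x := pact g x
  one_smul x := by
    show pact 1 x = x
    simp [pact]
  mul_smul g h x := by
    show pact (g * h) x = pact g (pact h x)
    simp [pact]

lemma pact_mk (A : SL3) : pact ((QuotientGroup.mk A : PSL3)) = smulP2 A := by
  funext x
  simp [pact, actHom, slPerm]

lemma continuous_pact (g : PSL3) : Continuous (pact g) := by
  obtain ⟨A, rfl⟩ := QuotientGroup.mk_surjective g
  rw [pact_mk]
  exact continuous_smulP2 A

/-- The action of an element of `PSL(3,ℂ)` on `ℙ²`, as a continuous map. -/
def pactCM (g : PSL3) : C(P2, P2) := ⟨pact g, continuous_pact g⟩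
instance : TopologicalSpace SL3 := instTopologicalSpaceSubtype

/-- A complex line in `ℙ²_ℂ`: the set of points whose representing vectors lie in
a fixed 2-dimensional complex linear subspace of `ℂ³`. -/
def IsLine (ℓ : Set P2) : Prop :=
  ∃ W : Submodule ℂ V3, Module.finrank ℂ W = 2 ∧ ℓ = {p : P2 | p.submodule ≤ W}

/-- The set of complex lines contained in a given subset of `ℙ²_ℂ`. -/
def linesIn (S : Set P2) : Set (Set P2) := {ℓ | IsLine ℓ ∧ ℓ ⊆ S}

/-- A family of lines is in general position if no point lies on three
(pairwise distinct) lines of the family. -/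
def InGenPos (L : Set (Set P2)) : Prop :=
  ∀ p : P2, ∀ ℓ₁ ∈ L, ∀ ℓ₂ ∈ L, ∀ ℓ₃ ∈ L,
    p ∈ ℓ₁ → p ∈ ℓ₂ → p ∈ ℓ₃ → ℓ₁ = ℓ₂ ∨ ℓ₁ = ℓ₃ ∨ ℓ₂ = ℓ₃

/-- The families of complex lines in general position contained in the complement of `Ω`. -/
def genFamilies (Ω : Set P2) : Set (Set (Set P2)) :=
  {L | (∀ ℓ ∈ L, IsLine ℓ ∧ ℓ ⊆ Ωᶜ) ∧ InGenPos L}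

/-- `Li Ω` : the number (in `ℕ∞`) of complex lines contained in the complement of `Ω`. -/
def Li (Ω : Set P2) : ℕ∞ := (linesIn Ωᶜ).encard

/-- `LiG Ω` : the maximal number (in `ℕ∞`) of complex lines in general position contained
in the complement of `Ω`. -/
def LiG (Ω : Set P2) : ℕ∞ := ⨆ L ∈ genFamilies Ω, L.encard

/-- `Γ` acts properly discontinuously on the nonempty open invariant set `Ω`. -/
def ActsPropDiscOn (Γ : Subgroup PSL3) (Ω : Set P2) : Prop :=
  Ω.Nonempty ∧ IsOpen Ω ∧ (∀ γ ∈ Γ, pact γ '' Ω = Ω) ∧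
    ∀ K : Set P2, K ⊆ Ω → IsCompact K →
      {γ : PSL3 | γ ∈ Γ ∧ ((pact γ '' K) ∩ K).Nonempty}.Finite

/-- `Ω` is a maximal open set on which `Γ` acts properly discontinuously. -/
def MaxDisc (Γ : Subgroup PSL3) (Ω : Set P2) : Prop :=
  ActsPropDiscOn Γ Ω ∧ ∀ Ω' : Set P2, ActsPropDiscOn Γ Ω' → Ω ⊆ Ω' → Ω' = Ω

/-- `L0 Γ` : the closure of the set of points with infinite isotropy group. -/
def L0 (Γ : Subgroup PSL3) : Set P2 :=
  closure {z : P2 | {γ : PSL3 | γ ∈ Γ ∧ pact γ z = z}.Infinite}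

/-- The cluster points of the orbit `Γ z`. -/
def orbitCluster (Γ : Subgroup PSL3) (z : P2) : Set P2 :=
  {w : P2 | ∀ U ∈ nhds w, {γ : PSL3 | γ ∈ Γ ∧ pact γ z ∈ U}.Infinite}

/-- The cluster points of `Γ K` for a set `K`. -/
def setCluster (Γ : Subgroup PSL3) (K : Set P2) : Set P2 :=
  {w : P2 | ∀ U ∈ nhds w, {γ : PSL3 | γ ∈ Γ ∧ ((pact γ '' K) ∩ U).Nonempty}.Infinite}

/-- `L1 Γ` : the closure of the set of cluster points of orbits `Γ z`, `z ∉ L0 Γ`. -/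
def L1 (Γ : Subgroup PSL3) : Set P2 :=
  closure (⋃ z ∈ (L0 Γ)ᶜ, orbitCluster Γ z)

/-- `L2 Γ` : the closure of the set of cluster points of `Γ K`,
`K` a compact subset of `ℙ²_ℂ ∖ (L0 Γ ∪ L1 Γ)`. -/
def L2 (Γ : Subgroup PSL3) : Set P2 :=
  closure (⋃ K ∈ {K : Set P2 | IsCompact K ∧ K ⊆ (L0 Γ ∪ L1 Γ)ᶜ}, setCluster Γ K)

/-- The Kulkarni limit set `Λ(Γ)`. -/
def kulkarniLimit (Γ : Subgroup PSL3) : Set P2 := L0 Γ ∪ L1 Γ ∪ L2 Γ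

/-- The Kulkarni discontinuity region `Ω(Γ)`. -/
def kulkarniRegion (Γ : Subgroup PSL3) : Set P2 := (kulkarniLimit Γ)ᶜ

/-- `C(Γ)` : the closure of the union of the Kulkarni limit sets of the cyclic
subgroups generated by the elements of `Γ`. -/
def CSet (Γ : Subgroup PSL3) : Set P2 :=
  closure (⋃ γ ∈ Γ, kulkarniLimit (Subgroup.zpowers γ))

/-- The equicontinuity set of `Γ` : points having a neighborhood `U` on which the
restrictions of the elements of `Γ` form a normal family, i.e. a relatively compact
subset of `C(U, ℙ²_ℂ)` for the compact-open topology. -/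
def eqSet (Γ : Subgroup PSL3) : Set P2 :=
  {z : P2 | ∃ U : Set P2, IsOpen U ∧ z ∈ U ∧
    IsCompact (closure {f : C(U, P2) | ∃ γ ∈ Γ, f = (pactCM γ).restrict U})}

/-- A vertex of a family `L` of lines lying in the complement of `Ω`. -/
def IsVertex (Ω : Set P2) (L : Set (Set P2)) (v : P2) : Prop :=
  ∃ ℓ₁ ∈ L, ∃ ℓ₂ ∈ L, ℓ₁ ≠ ℓ₂ ∧ ∃ C : Set (Set P2), C.Infinite ∧
    (∀ ℓ ∈ C, IsLine ℓ ∧ ℓ ⊆ Ωᶜ) ∧ ℓ₁ ∩ ℓ₂ ∩ ⋂₀ C = {v}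

open Classical

/-- Projection from the point `p` onto the line determined by `W` : `projPt p W x` is
the intersection point of the line through `p` and `x` with the line determined by `W`
(junk value if it is not unique). -/
def projPt (p : P2) (W : Submodule ℂ V3) (x : P2) : P2 :=
  if h : ∃ y : P2, y.submodule ≤ W ∧ y.submodule ≤ p.submodule ⊔ x.submodule
  then h.choose else x

section DualFrame

variable {ι K V : Type*} [Field K] [AddCommGroup V] [Module K V]

/-- A projective frame of the dual space: `dim V + 1` linear forms of which any `dim V` have no
common zero besides the origin. The hyperplanes `ker (f i)` are then in general position. -/
structure IsDualFrame (f : ι → Module.Dual K V) : Prop where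
  card_eq : Nat.card ι = Module.finrank K V + 1
  eq_zero : ∀ i v, (∀ j ≠ i, f j v = 0) → v = 0

lemma exists_eq_smul_of_ker_le_ker {f g : Module.Dual K V}
    (h : LinearMap.ker f ≤ LinearMap.ker g) : ∃ c : K, g = c • f := by
  have hg : g ∈ Submodule.span K (Set.range fun _ : Unit => f) :=
    mem_span_of_iInf_ker_le_ker (by simpa using h)
  rw [Set.range_const, Submodule.mem_span_singleton] at hg
  exact hg.imp fun _ => Eq.symm

lemma exists_ne_zero_forall_mem_eq_zero (f : ι → Module.Dual K V) {s : Finset ι}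
    (hs : s.card < Module.finrank K V) : ∃ v ≠ 0, ∀ i ∈ s, f i v = 0 := by
  have : FiniteDimensional K V := Module.finite_of_finrank_pos (by lia)
  have hker : LinearMap.ker (LinearMap.pi fun i : s => f i) ≠ ⊥ :=
    LinearMap.ker_ne_bot_of_finrank_lt (by simpa using hs)
  obtain ⟨v, hv, hv0⟩ := Submodule.exists_mem_ne_zero_of_ne_bot hker
  exact ⟨v, hv0, fun i hi => congrFun hv ⟨i, hi⟩⟩

namespace IsDualFrame

variable {f : ι → Module.Dual K V}

lemma finite (hf : IsDualFrame f) : Finite ι :=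
  (Nat.card_pos_iff.1 (by simp [hf.card_eq])).2

lemma nonempty (hf : IsDualFrame f) : Nonempty ι :=
  (Nat.card_pos_iff.1 (by simp [hf.card_eq])).1

lemma exists_apply_ne_zero (hf : IsDualFrame f) {k l : ι} (hkl : k ≠ l) :
    ∃ v, f l v ≠ 0 ∧ ∀ j, j ≠ k → j ≠ l → f j v = 0 := by
  have := hf.finite
  have := Fintype.ofFinite ι
  have hcard : ({k, l}ᶜ : Finset ι).card < Module.finrank K V := by
    have hpair := Finset.card_add_card_compl {k, l}
    rw [Finset.card_pair hkl, Fintype.card_eq_nat_card, hf.card_eq] at hpair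
    lia
  obtain ⟨v, hv0, hv⟩ := exists_ne_zero_forall_mem_eq_zero f hcard
  simp only [Finset.mem_compl, Finset.mem_insert, Finset.mem_singleton, not_or, and_imp] at hv
  refine ⟨v, fun hl => hv0 (hf.eq_zero k v fun j hjk => ?_), hv⟩
  by_cases hjl : j = l
  · rwa [hjl]
  · exact hv j hjk hjl

/-- The vector `v` on which all the forms but `f k` and `f l` vanish spans an eigenline of `A`, and
evaluating `f k` and `f l` there shows that they are scaled by the same factor. -/
lemma exists_eq_smul_id (hf : IsDualFrame f)
    {A : V →ₗ[K] V} (hA : ∀ i v, f i v = 0 → f i (A v) = 0) : ∃ c : K, A = c • LinearMap.id := by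
  choose d hd using fun i => exists_eq_smul_of_ker_le_ker (f := f i) (g := f i ∘ₗ A) (hA i)
  have hfA (i v) : f i (A v) = d i * f i v := LinearMap.congr_fun (hd i) v
  have hdd (k l : ι) : d k = d l := by
    by_cases hkl : k = l
    · rw [hkl]
    obtain ⟨v, hl, hv⟩ := hf.exists_apply_ne_zero hkl
    have hAv : A v - d k • v = 0 := hf.eq_zero l _ fun j hjl => by
      by_cases hjk : j = k
      · simp [hjk, hfA]
      · simp [hfA, hv j hjk hjl]
    have h := hfA l v
    rw [sub_eq_zero.1 hAv, map_smul, smul_eq_mul] at h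
    exact mul_right_cancel₀ hl h
  obtain ⟨i⟩ := hf.nonempty
  refine ⟨d i, LinearMap.ext fun v => sub_eq_zero.1 <| hf.eq_zero i _ fun j _ => ?_⟩
  simp [hfA, hdd j i]

end IsDualFrame

end DualFrame

lemma mk_submodule_le_iff {K V : Type*} [DivisionRing K] [AddCommGroup V] [Module K V] {v : V}
    (hv : v ≠ 0) (W : Submodule K V) :
    (Projectivization.mk K v hv).submodule ≤ W ↔ v ∈ W := by
  rw [Projectivization.submodule_mk, Submodule.span_singleton_le_iff_mem]

section Lines

open scoped Pointwise

variable {ℓ : Set P2} {L : Set (Set P2)}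

lemma pact_eq_smul (g : PSL3) (p : P2) : pact g p = g • p := rfl

lemma pact_image (g : PSL3) (S : Set P2) : pact g '' S = g • S := rfl

instance : ContinuousConstSMul PSL3 P2 := ⟨continuous_pact⟩

lemma mk_smul_mk (A : SL3) {v : V3} (hv : v ≠ 0) :
    (A : PSL3) • Projectivization.mk ℂ v hv =
      Projectivization.mk ℂ (Matrix.SpecialLinearGroup.toLin' A v)
        ((Matrix.SpecialLinearGroup.toLin' A).map_ne_zero_iff.mpr hv) := by
  rw [← pact_eq_smul, pact_mk, smulP2_mk]

lemma isLine_iff_exists_dual : IsLine ℓ ↔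
    ∃ f : Module.Dual ℂ V3, f ≠ 0 ∧ ∀ v hv, Projectivization.mk ℂ v hv ∈ ℓ ↔ f v = 0 := by
  constructor
  · rintro ⟨W, hW, rfl⟩
    have hlt : W < ⊤ := Submodule.lt_top_of_finrank_lt_finrank (by simp [hW])
    obtain ⟨f, hf, hWf⟩ := W.exists_le_ker_of_lt_top hlt
    have hker := Module.Dual.finrank_ker_add_one_of_ne_zero hf
    rw [Module.finrank_fin_fun] at hker
    have hWeq : W = LinearMap.ker f := Submodule.eq_of_le_of_finrank_eq hWf (by lia)
    exact ⟨f, hf, fun v hv => by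
      rw [Set.mem_ofPred_eq, mk_submodule_le_iff, hWeq, LinearMap.mem_ker]⟩
  · rintro ⟨f, hf, hℓ⟩
    have hker := Module.Dual.finrank_ker_add_one_of_ne_zero hf
    rw [Module.finrank_fin_fun] at hker
    refine ⟨LinearMap.ker f, by lia, Set.ext fun p => ?_⟩
    induction p using Projectivization.ind with
    | h v hv => rw [hℓ, Set.mem_ofPred_eq, mk_submodule_le_iff, LinearMap.mem_ker]

lemma IsLine.nonempty (hℓ : IsLine ℓ) : ℓ.Nonempty := by
  obtain ⟨f, -, hf⟩ := isLine_iff_exists_dual.1 hℓ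
  obtain ⟨v, hv0, hv⟩ := exists_ne_zero_forall_mem_eq_zero (fun _ : Unit => f) (s := {()}) (by simp)
  exact ⟨Projectivization.mk ℂ v hv0, (hf v hv0).2 (hv () (by simp))⟩

lemma IsLine.smul (hℓ : IsLine ℓ) (g : PSL3) : IsLine (g • ℓ) := by
  obtain ⟨f, hf0, hf⟩ := isLine_iff_exists_dual.1 hℓ
  obtain ⟨A, rfl⟩ := QuotientGroup.mk_surjective g
  refine isLine_iff_exists_dual.2
    ⟨f ∘ₗ (Matrix.SpecialLinearGroup.toLin' A⁻¹).toLinearMap, ?_, fun v hv => ?_⟩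
  · rw [← LinearMap.zero_comp (Matrix.SpecialLinearGroup.toLin' A⁻¹).toLinearMap]
    exact fun h => hf0 <| (LinearMap.cancel_right (LinearEquiv.surjective _)).1 h
  · rw [Set.mem_smul_set_iff_inv_smul_mem, ← QuotientGroup.mk_inv, mk_smul_mk, hf]
    rfl

lemma InGenPos.mono {L' : Set (Set P2)} (hL : InGenPos L) (h : L' ⊆ L) : InGenPos L' :=
  fun p ℓ₁ h₁ ℓ₂ h₂ ℓ₃ h₃ => hL p ℓ₁ (h h₁) ℓ₂ (h h₂) ℓ₃ (h h₃)

lemma InGenPos.isDualFrame (hL : InGenPos L) (hcard : L.encard = 4)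
    {f : L → Module.Dual ℂ V3} (hf : ∀ (ℓ : L) v hv, Projectivization.mk ℂ v hv ∈ ℓ.1 ↔ f ℓ v = 0) :
    IsDualFrame f where
  card_eq := by
    have hncard : L.ncard = 4 := by simp [Set.ncard, hcard]
    simpa using hncard
  eq_zero := by
    rintro ⟨ℓ, hℓ⟩ v hv
    have hcard' : (L \ {ℓ}).encard = 3 := by
      have h := Set.encard_sdiff_singleton_add_one hℓ
      rw [hcard] at h
      exact WithTop.add_right_cancel ENat.one_ne_top h
    obtain ⟨ℓ₁, ℓ₂, ℓ₃, h₁₂, h₁₃, h₂₃, h⟩ := Set.encard_eq_three.1 hcard'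
    by_contra hv0
    have hmem : ∀ ℓ' ∈ L \ {ℓ}, ℓ' ∈ L ∧ Projectivization.mk ℂ v hv0 ∈ ℓ' :=
      fun ℓ' hℓ' => ⟨hℓ'.1, (hf ⟨ℓ', hℓ'.1⟩ v hv0).2 (hv _ fun h => hℓ'.2 (congrArg Subtype.val h))⟩
    simp only [h, Set.forall_mem_insert, Set.mem_singleton_iff, forall_eq] at hmem
    obtain ⟨⟨hL₁, hv₁⟩, ⟨hL₂, hv₂⟩, hL₃, hv₃⟩ := hmem
    rcases hL _ _ hL₁ _ hL₂ _ hL₃ hv₁ hv₂ hv₃ with h | h | h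
    · exact h₁₂ h
    · exact h₁₃ h
    · exact h₂₃ h

lemma mk_eq_one_of_toLin'_eq_smul_id {A : SL3} {c : ℂ}
    (hA : (Matrix.SpecialLinearGroup.toLin' A).toLinearMap = c • LinearMap.id) :
    (A : PSL3) = 1 := by
  have hscalar : A.1 = Matrix.scalar (Fin 3) c := by
    rw [Matrix.SpecialLinearGroup.toLin'_to_linearMap] at hA
    have h := congrArg LinearMap.toMatrix' hA
    simpa [Matrix.smul_one_eq_diagonal] using h
  rw [QuotientGroup.eq_one_iff, Matrix.SpecialLinearGroup.mem_center_iff]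
  exact ⟨c, by simpa [hscalar] using A.2, hscalar.symm⟩

theorem InGenPos.fixingSubgroup_eq_bot (hL : InGenPos L) (hline : ∀ ℓ ∈ L, IsLine ℓ)
    (hcard : L.encard = 4) : fixingSubgroup PSL3 L = ⊥ := by
  choose f _ hf using fun ℓ : L => isLine_iff_exists_dual.1 (hline ℓ ℓ.2)
  rw [Subgroup.eq_bot_iff_forall]
  intro g hg
  obtain ⟨A, rfl⟩ := QuotientGroup.mk_surjective g
  rw [mem_fixingSubgroup_iff] at hg
  obtain ⟨c, hc⟩ := (hL.isDualFrame hcard hf).exists_eq_smul_id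
    (A := (Matrix.SpecialLinearGroup.toLin' A).toLinearMap) fun ℓ v hv => by
      by_cases hv0 : v = 0
      · simp [hv0]
      have hmem := Set.smul_mem_smul_set (a := (A : PSL3)) ((hf ℓ v hv0).2 hv)
      rw [hg ℓ ℓ.2, mk_smul_mk, hf] at hmem
      exact hmem
  exact mk_eq_one_of_toLin'_eq_smul_id hc

end Lines

section Counting

theorem infinite_of_fixingSubgroup_eq_bot {G α : Type*} [Group G] [MulAction G α] {Γ : Subgroup G}
    (hΓ : (Γ : Set G).Infinite) {B S : Set α} (hB : B.Finite) (hfix : fixingSubgroup G B = ⊥)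
    (hS : ∀ g ∈ Γ, ∀ x ∈ B, g • x ∈ S) : S.Infinite := by
  have := hB.to_subtype
  have hinj : Function.Injective fun (g : G) (x : B) => g • (x : α) := fun g h hgh => by
    have hmem : h⁻¹ * g ∈ fixingSubgroup G B := (mem_fixingSubgroup_iff G).2 fun x hx => by
      rw [mul_smul, inv_smul_eq_iff]
      exact congrFun hgh ⟨x, hx⟩
    rw [hfix, Subgroup.mem_bot, inv_mul_eq_one] at hmem
    exact hmem.symm
  have hpi := Set.infinite_of_injOn_mapsTo (t := Set.univ.pi fun _ : B => S) hinj.injOn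
    (fun g hg x _ => hS g hg x x.2) hΓ
  exact fun hfin => hpi (Set.Finite.pi fun _ => hfin)

end Counting

section Equivariance

open scoped Pointwise

lemma infinite_setOf_mem_conj_smul_iff {G : Type*} [Group G] (g : G) (Γ : Subgroup G)
    (P : G → Prop) :
    {γ | γ ∈ MulAut.conj g • Γ ∧ P γ}.Infinite ↔ {γ | γ ∈ Γ ∧ P (g * γ * g⁻¹)}.Infinite := by
  have himage : {γ | γ ∈ MulAut.conj g • Γ ∧ P γ} =
      MulAut.conj g '' {γ | γ ∈ Γ ∧ P (g * γ * g⁻¹)} := by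
    ext γ
    simp only [Set.mem_ofPred_eq, Subgroup.mem_smul_pointwise_iff_exists, Set.mem_image,
      MulAut.smul_def, MulAut.conj_apply]
    constructor
    · rintro ⟨⟨γ, hγ, rfl⟩, hP⟩
      exact ⟨γ, ⟨hγ, hP⟩, rfl⟩
    · rintro ⟨γ, ⟨hγ, hP⟩, rfl⟩
      exact ⟨⟨γ, hγ, rfl⟩, hP⟩
  rw [himage, Set.infinite_image_iff (MulAut.conj g).injective.injOn]

lemma smul_L0 (g : PSL3) (Γ : Subgroup PSL3) : g • L0 Γ = L0 (MulAut.conj g • Γ) := by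
  rw [L0, L0, ← closure_smul]
  congr 1
  ext z
  rw [Set.mem_smul_set_iff_inv_smul_mem, Set.mem_ofPred_eq, Set.mem_ofPred_eq,
    infinite_setOf_mem_conj_smul_iff]
  simp only [pact_eq_smul, mul_smul, smul_eq_iff_eq_inv_smul g]

lemma setCluster_singleton (Γ : Subgroup PSL3) (z : P2) :
    setCluster Γ {z} = orbitCluster Γ z := by
  simp [setCluster, orbitCluster]

lemma smul_setCluster (g : PSL3) (Γ : Subgroup PSL3) (K : Set P2) :
    g • setCluster Γ K = setCluster (MulAut.conj g • Γ) (g • K) := by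
  ext w
  obtain ⟨w, rfl⟩ := MulAction.surjective g w
  rw [Set.smul_mem_smul_set_iff]
  refine Iff.trans (forall_congr' fun U => ?_)
    (MulAction.surjective (β := Set P2) g).forall.symm
  rw [smul_mem_nhds_smul_iff, infinite_setOf_mem_conj_smul_iff]
  simp only [pact_image, mul_smul, inv_smul_smul, ← Set.smul_set_inter, Set.smul_set_nonempty]

lemma smul_orbitCluster (g : PSL3) (Γ : Subgroup PSL3) (z : P2) :
    g • orbitCluster Γ z = orbitCluster (MulAut.conj g • Γ) (g • z) := by
  rw [← setCluster_singleton, smul_setCluster, Set.smul_set_singleton, setCluster_singleton]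

lemma smul_L1 (g : PSL3) (Γ : Subgroup PSL3) : g • L1 Γ = L1 (MulAut.conj g • Γ) := by
  rw [L1, L1, ← closure_smul, ← smul_L0, ← Set.smul_set_compl, ← Set.image_smul (t := (L0 Γ)ᶜ),
    Set.biUnion_image, Set.smul_set_iUnion₂]
  simp only [smul_orbitCluster]

lemma smul_L2 (g : PSL3) (Γ : Subgroup PSL3) : g • L2 Γ = L2 (MulAut.conj g • Γ) := by
  have hK : {K | IsCompact K ∧ K ⊆ (L0 (MulAut.conj g • Γ) ∪ L1 (MulAut.conj g • Γ))ᶜ} =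
      (g • ·) '' {K | IsCompact K ∧ K ⊆ (L0 Γ ∪ L1 Γ)ᶜ} := by
    rw [← smul_L0, ← smul_L1, ← Set.smul_set_union, ← Set.smul_set_compl]
    ext K
    obtain ⟨K, rfl⟩ := MulAction.surjective g K
    rw [(MulAction.injective g).mem_set_image]
    exact and_congr (Homeomorph.smul g).isCompact_image Set.smul_set_subset_smul_set_iff
  rw [L2, L2, ← closure_smul, hK, Set.biUnion_image, Set.smul_set_iUnion₂]
  simp only [smul_setCluster]

lemma smul_kulkarniLimit (g : PSL3) (Γ : Subgroup PSL3) :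
    g • kulkarniLimit Γ = kulkarniLimit (MulAut.conj g • Γ) := by
  rw [kulkarniLimit, kulkarniLimit, Set.smul_set_union, Set.smul_set_union, smul_L0, smul_L1,
    smul_L2]

lemma smul_CSet (g : PSL3) (Γ : Subgroup PSL3) : g • CSet Γ = CSet (MulAut.conj g • Γ) := by
  have hzpowers (γ : PSL3) : MulAut.conj g • Subgroup.zpowers γ =
      Subgroup.zpowers (MulAut.conj g • γ) := MonoidHom.map_zpowers _ γ
  have hΓ : ⋃ γ ∈ MulAut.conj g • Γ, kulkarniLimit (Subgroup.zpowers γ) =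
      ⋃ γ ∈ Γ, kulkarniLimit (Subgroup.zpowers (MulAut.conj g • γ)) :=
    Set.biUnion_image (s := (Γ : Set PSL3)) (f := (MulAut.conj g • ·))
  rw [CSet, CSet, ← closure_smul, hΓ, Set.smul_set_iUnion₂]
  simp only [smul_kulkarniLimit, hzpowers]

lemma isCompact_closure_restrict_smul_iff (g : PSL3) (Γ : Subgroup PSL3) (U : Set P2) :
    IsCompact (closure {f | ∃ γ ∈ MulAut.conj g • Γ, f = (pactCM γ).restrict (g • U)}) ↔
      IsCompact (closure {f | ∃ γ ∈ Γ, f = (pactCM γ).restrict U}) := by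
  let φ : U ≃ₜ (g • U : Set P2) := (Homeomorph.smul g).image U
  let e : C(U, P2) ≃ₜ C((g • U : Set P2), P2) := φ.arrowCongr (Homeomorph.smul g)
  have he (γ : PSL3) : e ((pactCM γ).restrict U) =
      (pactCM (MulAut.conj g • γ)).restrict (g • U) := by
    ext y
    obtain ⟨x, rfl⟩ := φ.surjective y
    change g • γ • ((φ.symm (φ x) : U) : P2) = (g * γ * g⁻¹) • g • (x : P2)
    rw [φ.symm_apply_apply, mul_smul, mul_smul, inv_smul_smul]
  have himage : {f | ∃ γ ∈ MulAut.conj g • Γ, f = (pactCM γ).restrict (g • U)} =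
      e '' {f | ∃ γ ∈ Γ, f = (pactCM γ).restrict U} := by
    ext f
    constructor
    · rintro ⟨_, ⟨γ, hγ, rfl⟩, rfl⟩
      exact ⟨_, ⟨γ, hγ, rfl⟩, he γ⟩
    · rintro ⟨_, ⟨γ, hγ, rfl⟩, rfl⟩
      exact ⟨_, ⟨γ, hγ, rfl⟩, he γ⟩
  rw [himage, ← e.image_closure, e.isCompact_image]

lemma smul_eqSet (g : PSL3) (Γ : Subgroup PSL3) : g • eqSet Γ = eqSet (MulAut.conj g • Γ) := by
  ext z
  obtain ⟨z, rfl⟩ := MulAction.surjective g z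
  rw [Set.smul_mem_smul_set_iff]
  refine Iff.trans (exists_congr fun U => ?_)
    (MulAction.surjective (β := Set P2) g).exists.symm
  rw [isCompact_closure_restrict_smul_iff, Set.smul_mem_smul_set_iff]
  exact and_congr_left' (Homeomorph.smul g).isOpen_image.symm

lemma le_stabilizer_of_smul_eq {G α : Type*} [Group G] [MulAction G α] {F : Subgroup G → α}
    (hF : ∀ (g : G) Γ, g • F Γ = F (MulAut.conj g • Γ)) (Γ : Subgroup G) :
    Γ ≤ MulAction.stabilizer G (F Γ) := fun g hg => by
  rw [MulAction.mem_stabilizer_iff, hF, Subgroup.conj_smul_eq_self_of_mem hg]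

end Equivariance

section DiscontinuityRegion

open scoped Pointwise

variable {Γ : Subgroup PSL3} {Ω : Set P2}

instance : T1Space P2 where
  t1 p := by
    induction p using Projectivization.ind with
    | h v hv =>
      refine isQuotientMap_quotient_mk'.isClosed_preimage.1 ?_
      have hpre : Quotient.mk'' ⁻¹' {Projectivization.mk ℂ v hv} =
          (Subtype.val : {w : V3 // w ≠ 0} → V3) ⁻¹' (ℂ ∙ v) := by
        ext ⟨w, hw⟩
        change Projectivization.mk ℂ w hw = Projectivization.mk ℂ v hv ↔ w ∈ ℂ ∙ v
        rw [Projectivization.mk_eq_mk_iff', Submodule.mem_span_singleton]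
      exact hpre ▸ (Submodule.closed_of_finiteDimensional _).preimage continuous_subtype_val

lemma kulkarniLimit_eq_empty (hΓ : (Γ : Set PSL3).Finite) : kulkarniLimit Γ = ∅ := by
  have hfin (P : PSL3 → Prop) : ¬ {γ | γ ∈ Γ ∧ P γ}.Infinite :=
    Set.not_infinite.2 (hΓ.sep P)
  have hset (K : Set P2) : setCluster Γ K = ∅ :=
    Set.eq_empty_of_forall_notMem fun w hw => hfin _ (hw Set.univ Filter.univ_mem)
  have horbit (z : P2) : orbitCluster Γ z = ∅ := by rw [← setCluster_singleton, hset]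
  simp [kulkarniLimit, L0, L1, L2, hset, horbit, hfin]

lemma CSet_eq_empty (hΓ : (Γ : Set PSL3).Finite) : CSet Γ = ∅ := by
  have hzpowers : ∀ γ ∈ Γ, kulkarniLimit (Subgroup.zpowers γ) = ∅ := fun γ hγ =>
    kulkarniLimit_eq_empty (hΓ.subset (Subgroup.zpowers_le.2 hγ))
  rw [CSet, Set.iUnion₂_congr hzpowers]
  simp

lemma eqSet_eq_univ (hΓ : (Γ : Set PSL3).Finite) : eqSet Γ = Set.univ := by
  refine Set.eq_univ_of_forall fun z => ⟨Set.univ, isOpen_univ, trivial, ?_⟩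
  have hfin : {f | ∃ γ ∈ Γ, f = (pactCM γ).restrict Set.univ}.Finite :=
    (hΓ.image fun γ => (pactCM γ).restrict Set.univ).subset
      fun _ ⟨γ, hγ, hf⟩ => ⟨γ, hγ, hf.symm⟩
  rw [hfin.isClosed.closure_eq]
  exact hfin.isCompact

lemma MaxDisc.eq_univ (hΩ : MaxDisc Γ Ω) (hΓ : (Γ : Set PSL3).Finite) : Ω = Set.univ := by
  obtain ⟨⟨hne, -⟩, hmax⟩ := hΩ
  have huniv : ActsPropDiscOn Γ Set.univ := ⟨hne.mono (Set.subset_univ Ω), isOpen_univ,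
    fun γ _ => Set.smul_set_univ (a := γ), fun _ _ _ => hΓ.sep _⟩
  exact (hmax Set.univ huniv (Set.subset_univ Ω)).symm

/-- `Ω` is one of the usual candidates for a region of discontinuity of `Γ`: the equicontinuity
set, the Kulkarni region, the complement of `C(Γ)`, or a maximal open set on which `Γ` acts properly
discontinuously. -/
def IsDiscontinuityRegion (Γ : Subgroup PSL3) (Ω : Set P2) : Prop :=
  Ω = eqSet Γ ∨ Ω = kulkarniRegion Γ ∨ Ω = (CSet Γ)ᶜ ∨ MaxDisc Γ Ω

lemma IsDiscontinuityRegion.le_stabilizer_compl (hΩ : IsDiscontinuityRegion Γ Ω) :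
    Γ ≤ MulAction.stabilizer PSL3 Ωᶜ := by
  rw [stabilizer_compl]
  rcases hΩ with rfl | rfl | rfl | ⟨⟨-, -, hinv, -⟩, -⟩
  · exact le_stabilizer_of_smul_eq smul_eqSet Γ
  · rw [kulkarniRegion, stabilizer_compl]
    exact le_stabilizer_of_smul_eq smul_kulkarniLimit Γ
  · rw [stabilizer_compl]
    exact le_stabilizer_of_smul_eq smul_CSet Γ
  · exact hinv

lemma IsDiscontinuityRegion.eq_univ (hΩ : IsDiscontinuityRegion Γ Ω)
    (hΓ : (Γ : Set PSL3).Finite) : Ω = Set.univ := by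
  rcases hΩ with rfl | rfl | rfl | hΩ
  · exact eqSet_eq_univ hΓ
  · rw [kulkarniRegion, kulkarniLimit_eq_empty hΓ, Set.compl_empty]
  · rw [CSet_eq_empty hΓ, Set.compl_empty]
  · exact hΩ.eq_univ hΓ

lemma IsDiscontinuityRegion.infinite_of_mem_linesIn (hΩ : IsDiscontinuityRegion Γ Ω) {ℓ : Set P2}
    (hℓ : ℓ ∈ linesIn Ωᶜ) : (Γ : Set PSL3).Infinite := fun hfin => by
  obtain ⟨hline, hsub⟩ := hℓ
  obtain ⟨z, hz⟩ := hline.nonempty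
  exact hsub hz (hΩ.eq_univ hfin ▸ Set.mem_univ z)

end DiscontinuityRegion

section LinesInComplement

open scoped Pointwise

variable {Γ : Subgroup PSL3} {Ω : Set P2}

lemma exists_mem_genFamilies_encard_eq {n : ℕ} (hn : n ≤ LiG Ω) :
    ∃ L ∈ genFamilies Ω, L.encard = n := by
  obtain ⟨L, hL, hcard⟩ : ∃ L ∈ genFamilies Ω, n ≤ L.encard := by
    cases n with
    | zero => exact ⟨∅, by simp [genFamilies, InGenPos], by simp⟩
    | succ n =>
      have hlt : (n : ℕ∞) < LiG Ω := lt_of_lt_of_le (by exact_mod_cast n.lt_succ_self) hn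
      obtain ⟨L, hL, hnL⟩ := lt_biSup_iff.1 hlt
      exact ⟨L, hL, by exact_mod_cast Order.add_one_le_of_lt hnL⟩
  obtain ⟨L', hL', hcard'⟩ := Set.exists_subset_encard_eq hcard
  exact ⟨L', ⟨fun ℓ hℓ => hL.1 ℓ (hL' hℓ), hL.2.mono hL'⟩, hcard'⟩

theorem infinite_linesIn_of_le_stabilizer {S : Set P2} (hΓ : (Γ : Set PSL3).Infinite)
    (hS : Γ ≤ MulAction.stabilizer PSL3 S) {L : Set (Set P2)} (hL : L ⊆ linesIn S)
    (hgen : InGenPos L) (hcard : L.encard = 4) : (linesIn S).Infinite := by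
  refine infinite_of_fixingSubgroup_eq_bot hΓ (Set.finite_of_encard_eq_coe (k := 4) hcard)
    (hgen.fixingSubgroup_eq_bot (fun ℓ hℓ => (hL hℓ).1) hcard) fun g hg ℓ hℓ => ?_
  refine ⟨(hL hℓ).1.smul g, ?_⟩
  rw [← hS hg]
  exact Set.smul_set_mono (hL hℓ).2

theorem infinitely_many_lines_of_liG_ge_four_general (hΩ : IsDiscontinuityRegion Γ Ω)
    (h4 : 4 ≤ LiG Ω) : (linesIn Ωᶜ).Infinite := by
  obtain ⟨L, ⟨hL, hgen⟩, hcard⟩ := exists_mem_genFamilies_encard_eq (n := 4) h4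
  obtain ⟨ℓ, hℓ⟩ : L.Nonempty := Set.encard_ne_zero.1 (by simp [hcard])
  exact infinite_linesIn_of_le_stabilizer (hΩ.infinite_of_mem_linesIn (hL ℓ hℓ))
    hΩ.le_stabilizer_compl hL hgen hcard

end LinesInComplement

theorem infinitely_many_lines_of_liG_ge_four
    (Γ : Subgroup PSL3) (hΓ : DiscreteTopology ↥Γ) (Ω : Set P2)
    (hΩ : Ω = eqSet Γ ∨ Ω = kulkarniRegion Γ ∨ Ω = (CSet Γ)ᶜ ∨ MaxDisc Γ Ω)
    (h4 : 4 ≤ LiG Ω) :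
    (linesIn Ωᶜ).Infinite :=
  infinitely_many_lines_of_liG_ge_four_general hΩ h4
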